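/- Let T : (ℕ → Bool) → (ℕ → Bool) be a continuous tossing process. For each finite word x : List Bool let P_x be the set of finite words y that are minimal with respect to the prefix order among those with I_y ⊆ T⁻¹(I_x). Then: each P_x is a prefix code and T⁻¹(I_x) = ⋃_{y ∈ P_x} I_y; P_x is ⪯-minimal among prefix codes P' with T⁻¹(I_x) = ⋃_{y ∈ P'} I_y; μ(⋃_{y ∈ P_x} I_y) = 2^(−|x|); the assignment x ↦ P_x is a coding function (P_ε = {ε}; if x, y are prefix-incomparable then P_x ∩ P_y = ∅; if x is a prefix of y then P_x ⪯ P_y); and it is exhaustive: for every exhaustive prefix code P, the set ⋃_{x ∈ P} P_x is an exhaustive prefix code. Moreover x ↦ P_x is the unique coding function with these properties. -/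

import Mathlib

open MeasureTheory

/-- The cylinder determined by a finite binary word `x`: the set of infinite binary
sequences having `x` as a prefix. -/
def Cyl (x : List Bool) : Set (ℕ → Bool) := {α | ∀ i : Fin x.length, α i.1 = x.get i}

/-- The uniform Bernoulli(1/2) ("fair coin") measure on `Bool`. -/
noncomputable def coin : Measure Bool := (PMF.bernoulli 2⁻¹ (by norm_num)).toMeasure

/-- `μ` is the fair-coin measure on Cantor space: the product over `ℕ` of uniform
Bernoulli(1/2) measures, characterized by the fact that all finite-dimensional marginals
are finite products of `coin`. -/
def IsFairCoin (μ : Measure (ℕ → Bool)) : Prop :=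
  IsProjectiveLimit μ (fun J : Finset ℕ => Measure.pi fun _ : J => coin)

/-- A binary prefix code: a nonempty set of finite binary words, no element of which is a
proper prefix of another. -/
def IsPrefixCode (P : Set (List Bool)) : Prop :=
  P.Nonempty ∧ ∀ x ∈ P, ∀ y ∈ P, x <+: y → x = y

/-- `P ⪯ Q`: every element of `Q` extends (has as a prefix) some element of `P`. -/
def CodeLE (P Q : Set (List Bool)) : Prop := ∀ y ∈ Q, ∃ x ∈ P, x <+: y

/-- An exhaustive set of words: every infinite binary sequence has a prefix in it. -/
def IsExhaustiveCode (P : Set (List Bool)) : Prop := ∀ α : ℕ → Bool, ∃ x ∈ P, α ∈ Cyl x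

/-- A coding function: each `P x` is a prefix code, `P ε = {ε}`, prefix-incomparable
words get disjoint codes, and `x` a prefix of `y` implies `P x ⪯ P y`. -/
def IsCodingFunction (P : List Bool → Set (List Bool)) : Prop :=
  (∀ x, IsPrefixCode (P x)) ∧
  P [] = {[]} ∧
  (∀ x y : List Bool, ¬ x <+: y → ¬ y <+: x → P x ∩ P y = ∅) ∧
  ∀ x y : List Bool, x <+: y → CodeLE (P x) (P y)

/-- The canonical coding function of `T`: `minCode T x` is the set of words `y` that are
minimal in the prefix order among those with `I_y ⊆ T⁻¹ I_x`. -/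
def minCode (T : (ℕ → Bool) → ℕ → Bool) (x : List Bool) : Set (List Bool) :=
  {y | Cyl y ⊆ T ⁻¹' Cyl x ∧
    ∀ z : List Bool, z <+: y → Cyl z ⊆ T ⁻¹' Cyl x → z = y}

theorem mem_cyl {x : List Bool} {α : ℕ → Bool} :
    α ∈ Cyl x ↔ ∀ i (h : i < x.length), α i = x[i] := by
  simp only [Cyl, Set.mem_setOf_eq, Fin.forall_iff, List.get_eq_getElem]

theorem cyl_nonempty (x : List Bool) : (Cyl x).Nonempty :=
  ⟨fun i => x.getD i true, mem_cyl.2 fun i h => by simp [h]⟩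

theorem cyl_mono {x y : List Bool} (h : x <+: y) : Cyl y ⊆ Cyl x := by
  intro α ha
  rw [mem_cyl] at ha ⊢
  intro i hi
  rw [ha i (lt_of_lt_of_le hi h.length_le), h.getElem hi]

theorem cyl_comparable {x y : List Bool} {α : ℕ → Bool} (hx : α ∈ Cyl x) (hy : α ∈ Cyl y)
    (hl : x.length ≤ y.length) : x <+: y := by
  rw [mem_cyl] at hx hy
  rw [List.prefix_iff_eq_take]
  apply List.ext_getElem
  · simp [hl]
  · intro i h1 h2
    rw [List.getElem_take, ← hx i h1, ← hy i (by omega)]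

theorem cyl_comparable_or {x y : List Bool} {α : ℕ → Bool} (hx : α ∈ Cyl x) (hy : α ∈ Cyl y) :
    x <+: y ∨ y <+: x := by
  rcases le_total x.length y.length with h | h
  · exact Or.inl (cyl_comparable hx hy h)
  · exact Or.inr (cyl_comparable hy hx h)

theorem cyl_eq (x : List Bool) : Cyl x =
    MeasureTheory.cylinder (α := fun _ : ℕ => Bool) (Finset.range x.length)
      (Set.univ.pi fun i : Finset.range x.length => ({x.getD i.1 true} : Set Bool)) := by
  ext α
  rw [mem_cyl, MeasureTheory.mem_cylinder]
  simp only [Set.mem_pi, Set.mem_univ, forall_true_left, Finset.restrict_def,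
    Set.mem_singleton_iff, Subtype.forall, Finset.mem_range]
  refine forall_congr' fun i => forall_congr' fun h => ?_
  simp [h]

theorem cyl_isOpen (x : List Bool) : IsOpen (Cyl x) := by
  have : Cyl x = ⋂ i : Fin x.length, (fun α : ℕ → Bool => α i.1) ⁻¹' {x.get i} := by
    ext α; simp [Cyl]
  rw [this]
  exact isOpen_iInter_of_finite fun i =>
    (isOpen_discrete _).preimage (continuous_apply i.1)

theorem cyl_nhd {U : Set (ℕ → Bool)} (hU : IsOpen U) {α : ℕ → Bool} (ha : α ∈ U) :
    ∃ y, α ∈ Cyl y ∧ Cyl y ⊆ U := by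
  obtain ⟨I, u, hu, hs⟩ := isOpen_pi_iff.1 hU α ha
  refine ⟨List.ofFn fun i : Fin (I.sup id + 1) => α i, mem_cyl.2 (fun i h => by rw [List.getElem_ofFn]), ?_⟩
  intro β hb
  rw [mem_cyl] at hb
  apply hs
  intro i hi
  have h1 : i ≤ I.sup id := Finset.le_sup (f := id) hi
  have := hb i (by simp; omega)
  simp only [List.getElem_ofFn] at this
  rw [this]
  exact (hu i hi).2

theorem coin_singleton (b : Bool) : coin {b} = 2⁻¹ := by
  rw [coin, PMF.toMeasure_apply_singleton _ _ (measurableSet_singleton b)]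
  cases b <;> simp [PMF.bernoulli_apply]

instance : IsProbabilityMeasure coin := by unfold coin; infer_instance

theorem measure_cyl {μ : Measure (ℕ → Bool)} (hμ : IsFairCoin μ) (x : List Bool) :
    μ (Cyl x) = 2 ^ (-(x.length : ℤ)) := by
  unfold IsFairCoin at hμ
  rw [cyl_eq, hμ.measure_cylinder _ (MeasurableSet.univ_pi fun i => measurableSet_singleton _),
    Measure.pi_pi]
  simp only [coin_singleton]
  simp [ENNReal.zpow_neg, ENNReal.inv_pow]

theorem exists_minCode {T : (ℕ → Bool) → ℕ → Bool} {x : List Bool} :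
    ∀ (n : ℕ) (y : List Bool), y.length = n → Cyl y ⊆ T ⁻¹' Cyl x →
      ∃ z ∈ minCode T x, z <+: y := by
  intro n
  induction n using Nat.strong_induction_on with
  | _ n ih =>
    intro y hy hs
    by_cases h : y ∈ minCode T x
    · exact ⟨y, h, List.prefix_refl y⟩
    · have : ∃ z, z <+: y ∧ Cyl z ⊆ T ⁻¹' Cyl x ∧ z ≠ y := by
        by_contra hcon
        push Not at hcon
        exact h ⟨hs, hcon⟩
      obtain ⟨z, hz, hzs, hne⟩ := this
      have hlt : z.length < n := by
        have := hz.length_le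
        rcases Nat.lt_or_ge z.length y.length with h | h
        · omega
        · exact absurd (hz.eq_of_length_le h) hne
      obtain ⟨w, hw, hwz⟩ := ih _ hlt z rfl hzs
      exact ⟨w, hw, hwz.trans hz⟩

theorem minCode_cover {T : (ℕ → Bool) → ℕ → Bool} (hc : Continuous T) (x : List Bool) :
    T ⁻¹' Cyl x = ⋃ y ∈ minCode T x, Cyl y := by
  apply Set.Subset.antisymm
  · intro α ha
    obtain ⟨y, hay, hy⟩ := cyl_nhd ((cyl_isOpen x).preimage hc) ha
    obtain ⟨z, hz, hzy⟩ := exists_minCode _ y rfl hy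
    exact Set.mem_biUnion hz (cyl_mono hzy hay)
  · exact Set.iUnion₂_subset fun y hy => hy.1

/-- For a continuous tossing process `T`, the assignment `x ↦ minCode T x` is the unique
coding function `P` such that (i) `T⁻¹ I_x = ⋃_{y ∈ P x} I_y`, (ii) each `P x` is
`⪯`-minimal among prefix codes with property (i), and (iii) `μ (⋃_{y ∈ P x} I_y) = 2^(-|x|)`;
moreover it is exhaustive. -/
theorem stmt11 (μ : Measure (ℕ → Bool)) (hμ : IsFairCoin μ)
    (T : (ℕ → Bool) → ℕ → Bool) (hc : Continuous T) (hm : Measurable T)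
    (hmp : ∀ A : Set (ℕ → Bool), MeasurableSet A → μ (T ⁻¹' A) = μ A) :
    IsCodingFunction (minCode T) ∧
    (∀ x : List Bool, T ⁻¹' Cyl x = ⋃ y ∈ minCode T x, Cyl y) ∧
    (∀ x : List Bool, ∀ P' : Set (List Bool), IsPrefixCode P' →
      T ⁻¹' Cyl x = ⋃ y ∈ P', Cyl y → CodeLE (minCode T x) P') ∧
    (∀ x : List Bool, μ (⋃ y ∈ minCode T x, Cyl y) = 2 ^ (-(x.length : ℤ))) ∧
    (∀ P : Set (List Bool), IsPrefixCode P → IsExhaustiveCode P →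
      IsPrefixCode (⋃ x ∈ P, minCode T x) ∧ IsExhaustiveCode (⋃ x ∈ P, minCode T x)) ∧
    ∀ P' : List Bool → Set (List Bool),
      IsCodingFunction P' →
      (∀ x : List Bool, T ⁻¹' Cyl x = ⋃ y ∈ P' x, Cyl y) →
      (∀ x : List Bool, ∀ Q : Set (List Bool), IsPrefixCode Q →
        T ⁻¹' Cyl x = ⋃ y ∈ Q, Cyl y → CodeLE (P' x) Q) →
      (∀ x : List Bool, μ (⋃ y ∈ P' x, Cyl y) = 2 ^ (-(x.length : ℤ))) →
      P' = minCode T := by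
  have hcov := minCode_cover hc
  have hpre : ∀ x, μ (T ⁻¹' Cyl x) = 2 ^ (-(x.length : ℤ)) := fun x => by
    rw [hmp _ (cyl_isOpen x).measurableSet, measure_cyl hμ]
  have hne : ∀ x, (T ⁻¹' Cyl x).Nonempty := fun x => by
    apply nonempty_of_measure_ne_zero (μ := μ)
    rw [hpre]
    exact (ENNReal.zpow_pos (by simp) (by simp) _).ne'
  have hnon : ∀ x, (minCode T x).Nonempty := fun x => by
    obtain ⟨α, ha⟩ := hne x
    rw [hcov] at ha
    simp only [Set.mem_iUnion] at ha
    obtain ⟨y, hy, -⟩ := ha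
    exact ⟨y, hy⟩
  have hcode : ∀ x, IsPrefixCode (minCode T x) := fun x =>
    ⟨hnon x, fun u hu v hv h => hv.2 u h hu.1⟩
  have hmin : ∀ x : List Bool, ∀ P' : Set (List Bool),
      T ⁻¹' Cyl x = ⋃ y ∈ P', Cyl y → CodeLE (minCode T x) P' := by
    intro x P' h y hy
    refine exists_minCode _ y rfl ?_
    rw [h]
    exact Set.subset_biUnion_of_mem (u := Cyl) hy
  have hcomp : ∀ x y u v : List Bool, u ∈ minCode T x → v ∈ minCode T y → u <+: v →
      x <+: y ∨ y <+: x := by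
    intro x y u v hu hv h
    obtain ⟨α, ha⟩ := cyl_nonempty v
    exact cyl_comparable_or (hu.1 (cyl_mono h ha)) (hv.1 ha)
  refine ⟨⟨hcode, ?_, ?_, ?_⟩, hcov, fun x P' _ h => hmin x P' h, ?_, ?_, ?_⟩
  · have h0 : ∀ y, Cyl y ⊆ T ⁻¹' Cyl [] := fun y α _ => by simp [Cyl]
    ext y
    constructor
    · intro hy
      exact (hy.2 [] List.nil_prefix (h0 _)).symm
    · rintro rfl
      exact ⟨h0 _, fun z hz _ => List.prefix_nil.1 hz⟩
  · intro x y h1 h2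
    rw [Set.eq_empty_iff_forall_notMem]
    rintro u ⟨hu, hv⟩
    rcases hcomp x y u u hu hv (List.prefix_refl u) with h | h
    · exact h1 h
    · exact h2 h
  · intro x y h u hu
    exact exists_minCode _ u rfl (hu.1.trans (Set.preimage_mono (cyl_mono h)))
  · intro x
    rw [← hcov, hpre]
  · intro P hP hE
    refine ⟨⟨?_, ?_⟩, ?_⟩
    · obtain ⟨x, hx⟩ := hP.1
      obtain ⟨y, hy⟩ := hnon x
      exact ⟨y, Set.mem_biUnion hx hy⟩
    · intro u hu v hv h
      simp only [Set.mem_iUnion] at hu hv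
      obtain ⟨x, hx, hu⟩ := hu
      obtain ⟨y, hy, hv⟩ := hv
      have hxy : x = y := by
        rcases hcomp x y u v hu hv h with h | h
        · exact hP.2 x hx y hy h
        · exact (hP.2 y hy x hx h).symm
      subst hxy
      exact (hcode x).2 u hu v hv h
    · intro α
      obtain ⟨x, hx, hT⟩ := hE (T α)
      have : α ∈ T ⁻¹' Cyl x := hT
      rw [hcov] at this
      simp only [Set.mem_iUnion] at this
      obtain ⟨y, hy, ha⟩ := this
      exact ⟨y, Set.mem_biUnion hx hy, ha⟩
  · intro P' hP' h1 h2 _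
    have anti : ∀ A B : Set (List Bool), IsPrefixCode A → CodeLE A B → CodeLE B A → A ⊆ B := by
      intro A B hA hAB hBA u hu
      obtain ⟨m, hm, hmu⟩ := hBA u hu
      obtain ⟨w, hw, hwm⟩ := hAB m hm
      have := hA.2 w hw u hu (hwm.trans hmu)
      subst this
      have := hmu.eq_of_length_le hwm.length_le
      rwa [← this]
    funext x
    have ha := h2 x _ (hcode x) (hcov x)
    have hb := hmin x _ (h1 x)
    exact Set.Subset.antisymm (anti _ _ (hP'.1 x) ha hb) (anti _ _ (hcode x) hb ha)
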